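/- Let π, r ∈ ℤ[ω] with π a prime, π ≡ r ≡ 1 (mod 3), gcd(π,r)=1, and let k > 0, j ≥ 0 be integers with k ≠ j+1. Then g(rπ^j, π^k) = φ(π^k) if 3 divides k and k ≤ j, and g(rπ^j, π^k) = 0 otherwise. -/

import Mathlib

open Complex

noncomputable section

/-- The primitive cube root of unity `ω = e^{2πi/3}`. -/
def ω : ℂ := Complex.exp (2 * Real.pi * Complex.I / 3)

/-- The ring of Eisenstein integers `ℤ[ω]`, as a subring of `ℂ`. -/
def Zω : Subring ℂ := Subring.closure {ω}

/-- `ω` as an element of `ℤ[ω]`. -/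
def ωZ : Zω := ⟨ω, Subring.subset_closure rfl⟩

/-- The ramified prime `λ = 1 - ω` of `ℤ[ω]`. -/
def lamZ : Zω := 1 - ωZ

/-- The norm `N(a) = |a|²` from `ℚ(ω)` to `ℚ`, restricted to `ℤ[ω]`. -/
def Nm (a : Zω) : ℝ := Complex.normSq (a : ℂ)

/-- The norm of an Eisenstein integer, as a natural number. -/
def NmNat (a : Zω) : ℕ := ⌊Complex.normSq (a : ℂ)⌋₊

/-- `e(z) = e^{2πi Tr(z)} = e^{2πi (z + z̄)}`. -/
def eE (z : ℂ) : ℂ := Complex.exp (2 * Real.pi * Complex.I * (z + (starRingEnd ℂ) z))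

/-- `χ` is the cubic residue symbol `χ a b = (a/b)₃` on `ℤ[ω]`:
it is multiplicative in both arguments, and at prime moduli `π` coprime to `3`
it is given by the power-residue congruence
`(a/π)₃ ≡ a^{(N(π)-1)/3} (mod π)`, with values among `{1, ω, ω²}` (and `0` when `π ∣ a`). -/
def IsCubicSymbol (χ : Zω → Zω → Zω) : Prop :=
  (∀ a b₁ b₂ : Zω, χ a (b₁ * b₂) = χ a b₁ * χ a b₂) ∧
  (∀ a₁ a₂ b : Zω, χ (a₁ * a₂) b = χ a₁ b * χ a₂ b) ∧
  (∀ a : Zω, χ a 1 = 1) ∧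
  (∀ a π : Zω, Prime π → IsCoprime π 3 →
    (π ∣ a → χ a π = 0) ∧
    (¬ π ∣ a →
      ((χ a π : ℂ) = 1 ∨ (χ a π : ℂ) = ω ∨ (χ a π : ℂ) = ω ^ 2) ∧
      π ∣ (a ^ ((NmNat π - 1) / 3) - χ a π)))

/-- The shifted cubic Gauss sum `g(ν,c) = Σ_{d mod c} (d/c)₃ e(νd/c)`,
relative to a cubic residue symbol `χ`. -/
def gauss (χ : Zω → Zω → Zω) (ν c : Zω) : ℂ :=
  ∑' q : Zω ⧸ Ideal.span {c},
    ((χ (Quotient.out q) c : Zω) : ℂ) * eE (((ν * Quotient.out q : Zω) : ℂ) / (c : ℂ))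

/-- `μ` is the Möbius function of `ℤ[ω]`. -/
def IsMoebiusZω (μ : Zω → ℤ) : Prop :=
  μ 1 = 1 ∧
  (∀ a : Zω, ¬ Squarefree a → μ a = 0) ∧
  (∀ a b : Zω, IsCoprime a b → μ (a * b) = μ a * μ b) ∧
  (∀ π : Zω, Prime π → μ π = -1)

end

/-!
The sum `g(rπʲ, πᵏ)` is a Gauss sum over the ring `ℤ[ω]/(πᵏ)` of the multiplicative character
`(·/πᵏ)₃ = (·/π)₃ᵏ` and the additive character `ψ(d) = e(rπʲd/πᵏ)`. If `k ≤ j`, then `ψ` is trivial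
and orthogonality of multiplicative characters applies: as `(·/π)₃` has exact order 3, its `k`-th
power is trivial if and only if `3 ∣ k`. If `k ≥ j + 2`, then the multiplicative character is
invariant under translation by multiples of `π`, whereas `ψ` is not, so the sum vanishes. The order
of `(·/π)₃` is exactly 3 because `ω` stays of order 3 modulo `π`, so that `3 ∣ N(π) - 1` and a
generator of the cyclic group `(ℤ[ω]/(π))ˣ` is not killed by the exponent `(N(π) - 1)/3`.
-/

section

variable {R : Type*} [CommRing R]

theorem mk_span_singleton_eq_mk_iff {c x y : R} :
    Ideal.Quotient.mk (Ideal.span {c}) x = Ideal.Quotient.mk (Ideal.span {c}) y ↔ c ∣ x - y := by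
  rw [Ideal.Quotient.mk_eq_mk_iff_sub_mem, Ideal.mem_span_singleton]

theorem eq_of_pow_eq_one_of_dvd_sub [IsDomain R] {π u v : R} {n : ℕ} (hπ : ¬ IsUnit π)
    (hn : IsCoprime π n) (hu : u ^ n = 1) (hv : v ^ n = 1) (h : π ∣ u - v) : u = v := by
  by_contra hne
  have hgeom : ∑ i ∈ Finset.range n, u ^ i * v ^ (n - 1 - i) = 0 := by
    have := (Commute.all u v).geom_sum₂_mul n
    rw [hu, hv, sub_self] at this
    exact (mul_eq_zero.1 this).resolve_right (sub_ne_zero.2 hne)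
  have hdvd : π ∣ n * v ^ (n - 1) :=
    (dvd_geom_sum₂_iff_of_dvd_sub h).1 (hgeom ▸ dvd_zero π)
  have hvu : IsUnit (v ^ (n - 1)) := by
    rcases n.eq_zero_or_pos with rfl | hpos
    · simp
    · exact (IsUnit.of_pow_eq_one hv hpos.ne').pow _
  exact hπ (hn.isUnit_of_dvd' dvd_rfl (hvu.dvd_mul_right.1 hdvd))

theorem sq_add_self_add_one_eq_zero [IsDomain R] {ζ : R} (hζ : IsPrimitiveRoot ζ 3) :
    ζ ^ 2 + ζ + 1 = 0 := by
  have hgeom := hζ.geom_sum_eq_zero (by norm_num)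
  simp only [Finset.sum_range_succ, Finset.sum_range_zero, pow_zero, pow_one] at hgeom
  linear_combination hgeom

theorem isPrimitiveRoot_mk_span_singleton [IsDomain R] {π ζ : R} {n : ℕ} (hπ : ¬ IsUnit π)
    (hn : IsCoprime π n) (hζ : IsPrimitiveRoot ζ n) :
    IsPrimitiveRoot (Ideal.Quotient.mk (Ideal.span {π}) ζ) n where
  pow_eq_one := by rw [← map_pow, hζ.pow_eq_one, map_one]
  dvd_of_pow_eq_one l hl := by
    rw [← map_pow, ← map_one (Ideal.Quotient.mk _), mk_span_singleton_eq_mk_iff] at hl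
    refine hζ.dvd_of_pow_eq_one l (eq_of_pow_eq_one_of_dvd_sub hπ hn ?_ (one_pow n) hl)
    rw [pow_right_comm, hζ.pow_eq_one, one_pow]

theorem dvd_natCard_units_quotient_span_singleton [IsDomain R] {π ζ : R} {n : ℕ} (hn0 : n ≠ 0)
    (hπ : ¬ IsUnit π) (hn : IsCoprime π n) (hζ : IsPrimitiveRoot ζ n) :
    n ∣ Nat.card (R ⧸ Ideal.span {π})ˣ := by
  have hunit := (isPrimitiveRoot_mk_span_singleton hπ hn hζ).isUnit_unit hn0
  rw [hunit.eq_orderOf]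
  exact orderOf_dvd_natCard _

theorem natCard_quotient_span_singleton [IsDomain R] [Module.Free ℤ R] [Module.Finite ℤ R]
    {x : R} (hx : x ≠ 0) :
    Nat.card (R ⧸ Ideal.span {x}) = (Algebra.norm ℤ x).natAbs := by
  let b := Module.Free.chooseBasis ℤ R
  have hdet : (b.det fun i => x * b i).natAbs = Nat.card (R ⧸ Ideal.span {x}) := by
    rw [← funext (Ideal.basisSpanSingleton_apply b hx)]
    exact Submodule.natAbs_det_basis_change b ((Ideal.span {x}).restrictScalars ℤ)
      (Ideal.basisSpanSingleton b hx)
  have hmatrix : b.toMatrix (fun i => x * b i) = Algebra.leftMulMatrix b x := by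
    ext i j
    rw [Algebra.leftMulMatrix_eq_repr_mul, Module.Basis.toMatrix_apply]
  rw [← hdet, Module.Basis.det_apply, hmatrix, Algebra.norm_eq_matrix_det b]

theorem finite_quotient_span_singleton [Module.Free ℤ R] [Module.Finite ℤ R] [IsDomain R]
    {x : R} (hx : x ≠ 0) : Finite (R ⧸ Ideal.span {x}) :=
  Ideal.finiteQuotientOfFreeOfNeBot _ (by simpa using hx)

theorem isMaximal_span_singleton_of_prime [Module.Free ℤ R] [Module.Finite ℤ R] [IsDomain R]
    {π : R} (hπ : Prime π) : (Ideal.span {π}).IsMaximal := by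
  have := finite_quotient_span_singleton hπ.ne_zero
  have : (Ideal.span {π}).IsPrime := (Ideal.span_singleton_prime hπ.ne_zero).2 hπ
  exact Ideal.Quotient.maximal_of_isField _ (Finite.isField_of_domain _)

theorem isUnit_mk_span_singleton_pow_iff [IsDomain R] [Module.Free ℤ R] [Module.Finite ℤ R]
    {π a : R} (hπ : Prime π) {k : ℕ} :
    IsUnit (Ideal.Quotient.mk (Ideal.span {π ^ k}) a) ↔ k = 0 ∨ ¬ π ∣ a := by
  have := isMaximal_span_singleton_of_prime hπ
  rcases eq_or_ne k 0 with rfl | hk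
  · have : Subsingleton (R ⧸ Ideal.span {π ^ 0}) := Ideal.Quotient.subsingleton_iff.2 (by simp)
    exact iff_of_true (isUnit_of_subsingleton _) (Or.inl rfl)
  · rw [← Ideal.span_singleton_pow, Ideal.Quotient.isUnit_mk_pow_iff_notMem _ hk,
      Ideal.mem_span_singleton, or_iff_right hk]

theorem gaussSum_eq_zero_of_add_invariant [Fintype R] {R' : Type*} [CommRing R'] [IsDomain R']
    {χ : MulChar R R'} {ψ : AddChar R R'} {y : R} (hχ : ∀ x, χ (y + x) = χ x) (hψ : ψ y ≠ 1) :
    gaussSum χ ψ = 0 := by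
  refine eq_zero_of_mul_eq_self_left hψ ?_
  calc ψ y * gaussSum χ ψ = ∑ x, χ (y + x) * ψ (y + x) := by
        simp only [gaussSum, Finset.mul_sum, hχ, AddChar.map_add_eq_mul, mul_left_comm]
    _ = gaussSum χ ψ := Equiv.sum_comp (Equiv.addLeft y) fun x => χ x * ψ x

end

theorem isPrimitiveRoot_ω : IsPrimitiveRoot ω 3 := by
  simpa [ω] using Complex.isPrimitiveRoot_exp 3 (by norm_num)

theorem isPrimitiveRoot_ωZ : IsPrimitiveRoot ωZ 3 :=
  isPrimitiveRoot_ω.of_map_of_injective (f := Zω.subtype) Subtype.val_injective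

theorem conj_ω : (starRingEnd ℂ) ω = ω ^ 2 := by
  rw [← Complex.inv_eq_conj (isPrimitiveRoot_ω.norm'_eq_one three_ne_zero)]
  exact inv_eq_of_mul_eq_one_right (by rw [← pow_succ', isPrimitiveRoot_ω.pow_eq_one])

theorem ω_im_ne_zero : ω.im ≠ 0 := by
  intro h
  have hsq : ω ^ 2 = ω := by rw [← conj_ω, Complex.conj_eq_iff_im.2 h]
  have := isPrimitiveRoot_ω.pow_inj (i := 2) (j := 1) (by norm_num) (by norm_num)
  simp [hsq] at this

namespace Zω

/-- The evaluation `a + bX ↦ a + bω`, where `ℤ[X]/(X² + X + 1)` is encoded as the quadratic algebra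
with `X² = -1 - X`. -/
noncomputable def ofQuadraticAlgebra : QuadraticAlgebra ℤ (-1) (-1) →ₐ[ℤ] Zω :=
  QuadraticAlgebra.lift ⟨ωZ, Subtype.ext (by
    have : ω * ω = -1 - ω := by linear_combination sq_add_self_add_one_eq_zero isPrimitiveRoot_ω
    simp [ωZ, this, sub_eq_add_neg])⟩

theorem coe_ofQuadraticAlgebra (z : QuadraticAlgebra ℤ (-1) (-1)) :
    (ofQuadraticAlgebra z : ℂ) = z.re + z.im * ω := by
  simp [ofQuadraticAlgebra, ωZ]

theorem ofQuadraticAlgebra_bijective : Function.Bijective ofQuadraticAlgebra := by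
  constructor
  · rw [injective_iff_map_eq_zero]
    intro z hz
    have hz' : (z.re : ℂ) + z.im * ω = 0 := by rw [← coe_ofQuadraticAlgebra, hz]; rfl
    have him : z.im = 0 := by simpa [ω_im_ne_zero] using congrArg Complex.im hz'
    have hre : z.re = 0 := by simpa [him] using hz'
    exact QuadraticAlgebra.ext hre him
  · intro x
    have hle : Zω ≤ (Zω.subtype.comp ofQuadraticAlgebra.toRingHom).range := by
      refine Subring.closure_le.2 (Set.singleton_subset_iff.2 ⟨⟨0, 1⟩, ?_⟩)
      simpa using coe_ofQuadraticAlgebra ⟨0, 1⟩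
    obtain ⟨z, hz⟩ := hle x.2
    exact ⟨z, Subtype.ext hz⟩

/-- The presentation `ℤ[ω] ≅ ℤ[X]/(X² + X + 1)`, which supplies integer coordinates and the norm
form on `ℤ[ω]`. -/
noncomputable def equivQuadraticAlgebra : QuadraticAlgebra ℤ (-1) (-1) ≃ₐ[ℤ] Zω :=
  .ofBijective ofQuadraticAlgebra ofQuadraticAlgebra_bijective

theorem coe_equivQuadraticAlgebra (z : QuadraticAlgebra ℤ (-1) (-1)) :
    (equivQuadraticAlgebra z : ℂ) = z.re + z.im * ω :=
  coe_ofQuadraticAlgebra z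

instance : Module.Free ℤ Zω := .of_equiv equivQuadraticAlgebra.toLinearEquiv

instance : Module.Finite ℤ Zω := .equiv equivQuadraticAlgebra.toLinearEquiv

theorem normSq_equivQuadraticAlgebra (z : QuadraticAlgebra ℤ (-1) (-1)) :
    Complex.normSq (equivQuadraticAlgebra z) = (z.norm : ℤ) := by
  have hnormSq : (Complex.normSq (equivQuadraticAlgebra z) : ℂ) = (z.norm : ℤ) := by
    rw [← Complex.mul_conj, coe_equivQuadraticAlgebra, QuadraticAlgebra.norm_def]
    simp only [map_add, map_mul, map_intCast, conj_ω]
    push_cast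
    linear_combination (z.re * z.im : ℂ) * sq_add_self_add_one_eq_zero isPrimitiveRoot_ω +
      (z.im ^ 2 : ℂ) * isPrimitiveRoot_ω.pow_eq_one
  exact_mod_cast hnormSq

theorem norm_equivQuadraticAlgebra (z : QuadraticAlgebra ℤ (-1) (-1)) :
    Algebra.norm ℤ (equivQuadraticAlgebra z) = z.norm :=
  (Algebra.norm_eq_of_algEquiv equivQuadraticAlgebra z).trans
    (QuadraticAlgebra.det_toLinearMap_eq_norm z)

theorem NmNat_eq_natAbs_norm (x : Zω) : NmNat x = (Algebra.norm ℤ x).natAbs := by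
  obtain ⟨z, rfl⟩ := equivQuadraticAlgebra.surjective x
  have hnonneg : 0 ≤ z.norm := by
    exact_mod_cast normSq_equivQuadraticAlgebra z ▸ Complex.normSq_nonneg _
  rw [NmNat, normSq_equivQuadraticAlgebra, norm_equivQuadraticAlgebra, ← Int.floor_toNat,
    Int.floor_intCast]
  omega

theorem natCard_quotient {x : Zω} (hx : x ≠ 0) : Nat.card (Zω ⧸ Ideal.span {x}) = NmNat x := by
  rw [natCard_quotient_span_singleton hx, NmNat_eq_natAbs_norm]

theorem exists_int_add_conj_eq (x : Zω) : ∃ n : ℤ, (x : ℂ) + (starRingEnd ℂ) x = n := by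
  obtain ⟨z, rfl⟩ := equivQuadraticAlgebra.surjective x
  refine ⟨2 * z.re - z.im, ?_⟩
  rw [coe_equivQuadraticAlgebra]
  simp only [map_add, map_mul, map_intCast, conj_ω]
  push_cast
  linear_combination (z.im : ℂ) * sq_add_self_add_one_eq_zero isPrimitiveRoot_ω

end Zω

theorem eE_add (x y : ℂ) : eE (x + y) = eE x * eE y := by
  rw [eE, eE, eE, ← Complex.exp_add, map_add]
  congr 1
  ring

theorem eE_eq_one_iff (z : ℂ) : eE z = 1 ↔ ∃ n : ℤ, z + (starRingEnd ℂ) z = n := by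
  rw [eE, Complex.exp_eq_one_iff]
  simp only [mul_comm (_ : ℂ) (2 * Real.pi * Complex.I), mul_right_inj' Complex.two_pi_I_ne_zero]

theorem eE_coe (x : Zω) : eE x = 1 :=
  (eE_eq_one_iff _).2 (Zω.exists_int_add_conj_eq x)

theorem eE_coe_div_eq_one {x c : Zω} (h : c ∣ x) : eE ((x : ℂ) / c) = 1 := by
  obtain ⟨y, rfl⟩ := h
  rcases eq_or_ne c 0 with rfl | hc
  · simpa using eE_coe 0
  · rw [Subring.coe_mul, mul_div_cancel_left₀ _ (by exact_mod_cast hc), eE_coe]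

theorem dvd_mul_of_forall_eE_eq_one {ν c : Zω} (hc : c ≠ 0)
    (h : ∀ t : Zω, eE (((ν * t : Zω) : ℂ) / c) = 1) : c ∣ ν * (ωZ ^ 2 - ωZ) := by
  have hc' : (c : ℂ) ≠ 0 := by exact_mod_cast hc
  obtain ⟨a, ha⟩ := (eE_eq_one_iff _).1 (h 1)
  obtain ⟨b, hb⟩ := (eE_eq_one_iff _).1 (h ωZ)
  refine ⟨a * ωZ ^ 2 - b, Subtype.ext ?_⟩
  simp only [ωZ, mul_one, Subring.coe_mul, map_div₀, map_mul, conj_ω] at ha hb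
  have hz : (ν : ℂ) / c * (ω ^ 2 - ω) = a * ω ^ 2 - b := by
    linear_combination ω ^ 2 * ha - hb
  calc (ν : ℂ) * (ω ^ 2 - ω) = c * (ν / c * (ω ^ 2 - ω)) := by field_simp
    _ = c * (a * ω ^ 2 - b) := by rw [hz]

theorem eE_coe_mul_div_congr (ν : Zω) {c x y : Zω} (h : c ∣ x - y) :
    eE (((ν * x : Zω) : ℂ) / c) = eE (((ν * y : Zω) : ℂ) / c) := by
  have hsplit : ((ν * x : Zω) : ℂ) / c = ((ν * (x - y) : Zω) : ℂ) / c + ((ν * y : Zω) : ℂ) / c := by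
    rw [← add_div, ← Subring.coe_add, ← mul_add, sub_add_cancel]
  rw [hsplit, eE_add, eE_coe_div_eq_one (h.mul_left ν), one_mul]

/-- The additive character `d ↦ e(νd/c)` of `ℤ[ω]/(c)` occurring in the Gauss sum `g(ν,c)`. -/
noncomputable def eisensteinAddChar (ν c : Zω) : AddChar (Zω ⧸ Ideal.span {c}) ℂ where
  toFun q := eE (((ν * q.out : Zω) : ℂ) / c)
  map_zero_eq_one' := by
    rw [eE_coe_mul_div_congr ν (y := 0) (mk_span_singleton_eq_mk_iff.1 (by simp)),
      eE_coe_div_eq_one (by simp)]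
  map_add_eq_mul' x y := by
    rw [← eE_add, ← add_div, ← Subring.coe_add, ← mul_add]
    exact eE_coe_mul_div_congr ν (mk_span_singleton_eq_mk_iff.1 (by simp))

theorem eisensteinAddChar_mk (ν c x : Zω) :
    eisensteinAddChar ν c (Ideal.Quotient.mk _ x) = eE (((ν * x : Zω) : ℂ) / c) :=
  eE_coe_mul_div_congr ν (mk_span_singleton_eq_mk_iff.1 (by simp))

theorem eisensteinAddChar_eq_one {ν c : Zω} (h : c ∣ ν) : eisensteinAddChar ν c = 1 :=
  DFunLike.ext _ _ fun _ => eE_coe_div_eq_one (h.mul_right _)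

theorem exists_eisensteinAddChar_mk_mul_ne_one {π r : Zω} (hπ : Prime π) (h3 : IsCoprime π 3)
    (hr : IsCoprime π r) {k j : ℕ} (hjk : j + 2 ≤ k) :
    ∃ s : Zω, eisensteinAddChar (r * π ^ j) (π ^ k) (Ideal.Quotient.mk _ (π * s)) ≠ 1 := by
  by_contra! hall
  have hdvd : π ^ k ∣ r * π ^ j * π * (ωZ ^ 2 - ωZ) :=
    dvd_mul_of_forall_eE_eq_one (pow_ne_zero _ hπ.ne_zero) fun t => by
      rw [mul_assoc (r * π ^ j), ← eisensteinAddChar_mk, hall]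
  have hdvd' : π ^ (j + 1) * π ∣ π ^ (j + 1) * (r * (ωZ ^ 2 - ωZ)) := by
    convert (pow_dvd_pow π hjk).trans hdvd using 1 <;> ring
  have hdvd3 : π ∣ r * 3 := by
    have hsq : r * 3 = r * (ωZ ^ 2 - ωZ) * (ωZ - ωZ ^ 2) := by
      linear_combination
        r * (ωZ ^ 2 - 3 * ωZ + 3) * sq_add_self_add_one_eq_zero isPrimitiveRoot_ωZ
    exact hsq ▸ ((mul_dvd_mul_iff_left (pow_ne_zero _ hπ.ne_zero)).1 hdvd').mul_right _
  exact hπ.not_isUnit ((hr.mul_right h3).isUnit_of_dvd' dvd_rfl hdvd3)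

namespace IsCubicSymbol

variable {χ : Zω → Zω → Zω} {a b π : Zω}

theorem apply_pow (hχ : IsCubicSymbol χ) (a b : Zω) (k : ℕ) : χ a (b ^ k) = χ a b ^ k := by
  induction k with
  | zero => simpa using hχ.2.2.1 a
  | succ k ih => rw [pow_succ, hχ.1, ih, pow_succ]

theorem apply_mul_left (hχ : IsCubicSymbol χ) (a b c : Zω) : χ (a * b) c = χ a c * χ b c :=
  hχ.2.1 a b c

theorem apply_eq_zero (hχ : IsCubicSymbol χ) (hπ : Prime π) (h3 : IsCoprime π 3) (h : π ∣ a) :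
    χ a π = 0 :=
  (hχ.2.2.2 a π hπ h3).1 h

theorem dvd_pow_sub_apply (hχ : IsCubicSymbol χ) (hπ : Prime π) (h3 : IsCoprime π 3)
    (h : ¬ π ∣ a) : π ∣ a ^ ((NmNat π - 1) / 3) - χ a π :=
  ((hχ.2.2.2 a π hπ h3).2 h).2

theorem apply_pow_three (hχ : IsCubicSymbol χ) (hπ : Prime π) (h3 : IsCoprime π 3)
    (h : ¬ π ∣ a) : χ a π ^ 3 = 1 := by
  refine Subtype.ext ?_
  rw [Subring.coe_pow, Subring.coe_one]
  rcases ((hχ.2.2.2 a π hπ h3).2 h).1 with h1 | hω | hω2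
  · rw [h1, one_pow]
  · rw [hω, isPrimitiveRoot_ω.pow_eq_one]
  · rw [hω2, pow_right_comm, isPrimitiveRoot_ω.pow_eq_one, one_pow]

theorem apply_congr (hχ : IsCubicSymbol χ) (hπ : Prime π) (h3 : IsCoprime π 3)
    (h : π ∣ a - b) : χ a π = χ b π := by
  by_cases hb : π ∣ b
  · have ha : π ∣ a := (dvd_iff_dvd_of_dvd_sub h).2 hb
    rw [hχ.apply_eq_zero hπ h3 ha, hχ.apply_eq_zero hπ h3 hb]
  · have ha : ¬ π ∣ a := fun ha => hb ((dvd_iff_dvd_of_dvd_sub h).1 ha)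
    refine eq_of_pow_eq_one_of_dvd_sub hπ.not_isUnit (n := 3) h3 (hχ.apply_pow_three hπ h3 ha)
      (hχ.apply_pow_three hπ h3 hb) ?_
    have hpow := h.trans (sub_dvd_pow_sub_pow a b ((NmNat π - 1) / 3))
    have hcongr := (hpow.sub (hχ.dvd_pow_sub_apply hπ h3 ha)).add (hχ.dvd_pow_sub_apply hπ h3 hb)
    convert hcongr using 1
    ring

theorem one_apply (hχ : IsCubicSymbol χ) (hπ : Prime π) (h3 : IsCoprime π 3) : χ 1 π = 1 := by
  have hsq : χ 1 π * χ 1 π = χ 1 π := by rw [← hχ.apply_mul_left, one_mul]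
  have hne : χ 1 π ≠ 0 := fun h0 => by
    simpa [h0] using hχ.apply_pow_three hπ h3 hπ.not_dvd_one
  exact mul_left_cancel₀ hne (by rw [hsq, mul_one])

theorem apply_pow_congr (hχ : IsCubicSymbol χ) (hπ : Prime π) (h3 : IsCoprime π 3) {k : ℕ}
    (h : π ^ k ∣ a - b) : χ a (π ^ k) = χ b (π ^ k) := by
  rw [hχ.apply_pow, hχ.apply_pow]
  rcases k.eq_zero_or_pos with rfl | hk
  · rw [pow_zero, pow_zero]
  · rw [hχ.apply_congr hπ h3 ((dvd_pow_self π hk.ne').trans h)]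

theorem exists_isPrimitiveRoot_apply (hχ : IsCubicSymbol χ) (hπ : Prime π) (h3 : IsCoprime π 3) :
    ∃ a : Zω, ¬ π ∣ a ∧ IsPrimitiveRoot (χ a π) 3 := by
  have := isMaximal_span_singleton_of_prime hπ
  let := Ideal.Quotient.field (Ideal.span {π})
  have := finite_quotient_span_singleton hπ.ne_zero
  have hcard : Nat.card (Zω ⧸ Ideal.span {π})ˣ = NmNat π - 1 := by
    rw [Nat.card_units, Zω.natCard_quotient hπ.ne_zero]
  have hdvd3 : 3 ∣ NmNat π - 1 := hcard ▸
    dvd_natCard_units_quotient_span_singleton three_ne_zero hπ.not_isUnit h3 isPrimitiveRoot_ωZ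
  obtain ⟨g, hg⟩ := IsCyclic.exists_ofOrder_eq_natCard (α := (Zω ⧸ Ideal.span {π})ˣ)
  obtain ⟨a, ha⟩ := Ideal.Quotient.mk_surjective (g : Zω ⧸ Ideal.span {π})
  have hπa : ¬ π ∣ a := by
    rw [← Ideal.Quotient.eq_zero_iff_dvd, ha]
    exact g.ne_zero
  refine ⟨a, hπa, IsPrimitiveRoot.iff_orderOf.2 <|
    orderOf_eq_prime (hχ.apply_pow_three hπ h3 hπa) fun hone => ?_⟩
  have hdvd := hχ.dvd_pow_sub_apply hπ h3 hπa
  rw [hone, ← mk_span_singleton_eq_mk_iff, map_pow, ha, map_one] at hdvd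
  have hgpow : g ^ ((NmNat π - 1) / 3) = 1 := Units.ext hdvd
  have horder : NmNat π - 1 ∣ (NmNat π - 1) / 3 := by
    simpa only [hg, hcard] using orderOf_dvd_of_pow_eq_one hgpow
  have hpos : 0 < NmNat π - 1 := hcard ▸ Nat.card_pos
  exact (Nat.div_lt_self hpos (by norm_num)).not_ge
    (Nat.le_of_dvd (Nat.div_pos (Nat.le_of_dvd hpos hdvd3) three_pos) horder)

theorem apply_pow_eq_zero (hχ : IsCubicSymbol χ) (hπ : Prime π) (h3 : IsCoprime π 3) {k : ℕ}
    (ha : ¬ IsUnit (Ideal.Quotient.mk (Ideal.span {π ^ k}) a)) : χ a (π ^ k) = 0 := by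
  obtain ⟨hk, hπa⟩ := not_or.1 (mt (isUnit_mk_span_singleton_pow_iff hπ).2 ha)
  rw [hχ.apply_pow, hχ.apply_eq_zero hπ h3 (not_not.1 hπa), zero_pow hk]

theorem apply_pow_eq_one (hχ : IsCubicSymbol χ) (hπ : Prime π) (h3 : IsCoprime π 3) {k : ℕ}
    (hk : 3 ∣ k) (ha : IsUnit (Ideal.Quotient.mk (Ideal.span {π ^ k}) a)) :
    χ a (π ^ k) = 1 := by
  obtain ⟨m, rfl⟩ := hk
  rw [hχ.apply_pow]
  rcases (isUnit_mk_span_singleton_pow_iff hπ).1 ha with hm | hπa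
  · rw [hm, pow_zero]
  · rw [pow_mul, hχ.apply_pow_three hπ h3 hπa, one_pow]

/-- The cubic residue symbol `d ↦ (d/πᵏ)₃` as a multiplicative character of `ℤ[ω]/(πᵏ)`, evaluated
on the same representatives as in `gauss`. -/
noncomputable def mulChar (hχ : IsCubicSymbol χ) (hπ : Prime π) (h3 : IsCoprime π 3) (k : ℕ) :
    MulChar (Zω ⧸ Ideal.span {π ^ k}) ℂ where
  toFun q := χ q.out (π ^ k)
  map_one' := by
    rw [hχ.apply_pow_congr hπ h3 (b := 1) (mk_span_singleton_eq_mk_iff.1 (by simp)),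
      hχ.apply_pow, hχ.one_apply hπ h3, one_pow, Subring.coe_one]
  map_mul' x y := by
    rw [← Subring.coe_mul, ← hχ.apply_mul_left]
    exact congrArg _ (hχ.apply_pow_congr hπ h3 (mk_span_singleton_eq_mk_iff.1 (by simp)))
  map_nonunit' q hq := by
    rw [hχ.apply_pow_eq_zero hπ h3 (by rwa [Ideal.Quotient.mk_out]), Subring.coe_zero]

theorem mulChar_mk (hχ : IsCubicSymbol χ) (hπ : Prime π) (h3 : IsCoprime π 3) (k : ℕ) (a : Zω) :
    hχ.mulChar hπ h3 k (Ideal.Quotient.mk _ a) = χ a (π ^ k) :=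
  congrArg Subtype.val (hχ.apply_pow_congr hπ h3 (mk_span_singleton_eq_mk_iff.1 (by simp)))

theorem mulChar_mul_add (hχ : IsCubicSymbol χ) (hπ : Prime π) (h3 : IsCoprime π 3) (k : ℕ)
    (s : Zω) (x : Zω ⧸ Ideal.span {π ^ k}) :
    hχ.mulChar hπ h3 k (Ideal.Quotient.mk _ (π * s) + x) = hχ.mulChar hπ h3 k x := by
  obtain ⟨a, rfl⟩ := Ideal.Quotient.mk_surjective x
  rw [← map_add, mulChar_mk, mulChar_mk, hχ.apply_pow, hχ.apply_pow,
    hχ.apply_congr hπ h3 (b := a) (by simp)]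

theorem mulChar_eq_one_iff (hχ : IsCubicSymbol χ) (hπ : Prime π) (h3 : IsCoprime π 3) (k : ℕ) :
    hχ.mulChar hπ h3 k = 1 ↔ 3 ∣ k := by
  constructor
  · intro hone
    obtain ⟨a, hπa, hprim⟩ := hχ.exists_isPrimitiveRoot_apply hπ h3
    have hunit : IsUnit (Ideal.Quotient.mk (Ideal.span {π ^ k}) a) :=
      (isUnit_mk_span_singleton_pow_iff hπ).2 (Or.inr hπa)
    have hval : χ a (π ^ k) = 1 := Subtype.ext <| by
      rw [← hχ.mulChar_mk hπ h3, hone, MulChar.one_apply hunit, Subring.coe_one]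
    exact hprim.dvd_of_pow_eq_one k (by rw [← hχ.apply_pow, hval])
  · intro hk
    refine MulChar.ext fun u => ?_
    obtain ⟨a, ha⟩ := Ideal.Quotient.mk_surjective (u : Zω ⧸ Ideal.span {π ^ k})
    rw [MulChar.one_apply_coe, ← ha, mulChar_mk, hχ.apply_pow_eq_one hπ h3 hk (ha ▸ u.isUnit),
      Subring.coe_one]

theorem gauss_eq_gaussSum (hχ : IsCubicSymbol χ) (hπ : Prime π) (h3 : IsCoprime π 3) (ν : Zω)
    (k : ℕ) [Fintype (Zω ⧸ Ideal.span {π ^ k})] :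
    gauss χ ν (π ^ k) = gaussSum (hχ.mulChar hπ h3 k) (eisensteinAddChar ν (π ^ k)) :=
  tsum_fintype _

end IsCubicSymbol

theorem gauss_prime_power_general (χ : Zω → Zω → Zω) (hχ : IsCubicSymbol χ)
    (π r : Zω) (hπ : Prime π) (h3 : IsCoprime π 3)
    (hco : IsCoprime π r) (k j : ℕ) (hkj : k ≠ j + 1) :
    gauss χ (r * π ^ j) (π ^ k) =
      if 3 ∣ k ∧ k ≤ j then (Nat.card (Zω ⧸ Ideal.span {π ^ k})ˣ : ℂ) else 0 := by
  have := finite_quotient_span_singleton (pow_ne_zero k hπ.ne_zero)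
  have := Fintype.ofFinite (Zω ⧸ Ideal.span {π ^ k})
  rw [hχ.gauss_eq_gaussSum hπ h3]
  rcases le_or_gt k j with hle | hlt
  · rw [eisensteinAddChar_eq_one ((pow_dvd_pow π hle).mul_left r)]
    by_cases hk3 : 3 ∣ k
    · rw [if_pos ⟨hk3, hle⟩, (hχ.mulChar_eq_one_iff hπ h3 k).2 hk3, gaussSum_one_one]
    · rw [if_neg fun h => hk3 h.1, gaussSum_one_right (mt (hχ.mulChar_eq_one_iff hπ h3 k).1 hk3)]
  · obtain ⟨s, hs⟩ := exists_eisensteinAddChar_mk_mul_ne_one hπ h3 hco (by omega : j + 2 ≤ k)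
    rw [if_neg fun h => hlt.not_ge h.2,
      gaussSum_eq_zero_of_add_invariant (hχ.mulChar_mul_add hπ h3 k s) hs]

open Complex in
/-- for a prime `π ≡ 1 (mod 3)`, `r ≡ 1 (mod 3)` coprime to `π`,
and integers `k > 0`, `j ≥ 0` with `k ≠ j + 1`:
`g(rπʲ, πᵏ) = φ(πᵏ)` if `3 ∣ k` and `k ≤ j`, and `= 0` otherwise,
where `φ(πᵏ)` is the number of units of `ℤ[ω]/πᵏ`. -/
theorem gauss_prime_power (χ : Zω → Zω → Zω) (hχ : IsCubicSymbol χ)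
    (π r : Zω) (hπ : Prime π) (hπ1 : (3 : Zω) ∣ (π - 1)) (hr : (3 : Zω) ∣ (r - 1))
    (hco : IsCoprime π r) (k j : ℕ) (hk : 0 < k) (hkj : k ≠ j + 1) :
    gauss χ (r * π ^ j) (π ^ k) =
      if 3 ∣ k ∧ k ≤ j then (Nat.card (Zω ⧸ Ideal.span {π ^ k})ˣ : ℂ) else 0 := by
  obtain ⟨s, hs⟩ := hπ1
  exact gauss_prime_power_general χ hχ π r hπ ⟨1, -s, by linear_combination hs⟩ hco k j hkj
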